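/- Commutator estimate for vertical convolution operators: Let h : ℝ → ℂ be measurable with ∫_ℝ |z| |h(z)| dz < ∞. For λ > 0 put h_λ(z) := λ h(λz) and define, for measurable f on ℝ² × ℝ, the operator T_λ f(x_h, z) := ∫_ℝ h_λ(z − z′) f(x_h, z′) dz′. Let 1 ≤ p, r, s ≤ ∞ with 1/p = 1/r + 1/s. Let u, w be measurable functions on ℝ² × ℝ such that for almost every x_h the function z ↦ u(x_h,z) is differentiable, with ‖∂_z u‖_{L^∞_z(L^r_{x_h})} < ∞ and ‖w‖_{L²_z(L^s_{x_h})} < ∞. Then ‖ T_λ(u w) − u T_λ w ‖_{L²_z(L^p_{x_h})} ≤ λ^{−1} ( ∫_ℝ |z| |h(z)| dz ) ‖∂_z u‖_{L^∞_z(L^r_{x_h})} ‖w‖_{L²_z(L^s_{x_h})}. -/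

import Mathlib

/-!
For every `x_h` at which `u(x_h, ·)` is differentiable,
`|[T_λ, u] w (x_h, z)| ≤ ∫ |h_λ(z - t)| |u(x_h, t) - u(x_h, z)| |w(x_h, t)| dt`
(`enorm_integral_commutator_le`). Minkowski's integral inequality (`mixedLpNorm_lintegral_le`) moves
the `L^p_{x_h}` norm inside the integral and Hölder's inequality splits the product. The fundamental
theorem of calculus followed by Minkowski's inequality gives
`‖u(·, t) - u(·, z)‖_{L^r} ≤ |t - z| ‖∂_z u‖_{L^∞_z(L^r)}` (`mixedLpNorm_sub_le`). What remains is
a convolution in `z` of the kernel `|y| |h_λ(y)|` with `‖w(·, t)‖_{L^s}`, bounded in `L²_z` by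
Young's inequality (`mixedLpNorm_two_conv_le`), and `∫ |y| |h_λ(y)| dy = λ⁻¹ ∫ |z| |h(z)| dz`.

All intermediate estimates are between `ℝ≥0∞`-valued quantities, so an infinite right-hand side
needs no separate integrability discussion beyond the first step and the fundamental theorem of
calculus. Joint measurability of `∂_z u` comes from difference quotients, after replacing `u` by
zero over a null set of `x_h`.
-/

open MeasureTheory ENNReal

/-- The `L^p` norm (valued in `ℝ≥0∞`) of an `ℝ≥0∞`-valued function, with the usual
essential-supremum convention for `p = ∞`. -/
noncomputable def mixedLpNorm {α : Type*} [MeasurableSpace α] (μ : Measure α)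
    (p : ℝ≥0∞) (g : α → ℝ≥0∞) : ℝ≥0∞ :=
  if p = ∞ then essSup g μ else (∫⁻ a, g a ^ p.toReal ∂μ) ^ (1 / p.toReal)

/-- The vertical convolution operator `T_λ f(x_h, z) = ∫ h_λ(z − z′) f(x_h, z′) dz′`
with `h_λ(z) = λ h(λz)`. -/
noncomputable def vertConv (h : ℝ → ℂ) (lam : ℝ) (f : (ℝ × ℝ) × ℝ → ℂ)
    (xh : ℝ × ℝ) (z : ℝ) : ℂ :=
  ∫ z' : ℝ, (lam : ℂ) * h (lam * (z - z')) * f (xh, z')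

/-! ### Mixed norms and Minkowski's integral inequality -/

section helpers

variable {α β : Type*} [MeasurableSpace α] [MeasurableSpace β]

theorem mixedLpNorm_mono_ae {μ : Measure α} {p : ℝ≥0∞} {f g : α → ℝ≥0∞}
    (hfg : ∀ᵐ a ∂μ, f a ≤ g a) : mixedLpNorm μ p f ≤ mixedLpNorm μ p g := by
  unfold mixedLpNorm
  split_ifs with hp
  · exact essSup_mono_ae hfg
  · have : ∫⁻ a, f a ^ p.toReal ∂μ ≤ ∫⁻ a, g a ^ p.toReal ∂μ := by
      refine lintegral_mono_ae ?_
      filter_upwards [hfg] with a ha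
      gcongr
    gcongr

theorem mixedLpNorm_eq_eLpNorm {μ : Measure α} {p : ℝ≥0∞} (hp : 1 ≤ p) (f : α → ℂ) :
    mixedLpNorm μ p (fun a => ‖f a‖ₑ) = eLpNorm f p μ := by
  have hp0 : p ≠ 0 := (zero_lt_one.trans_le hp).ne'
  unfold mixedLpNorm eLpNorm
  rw [if_neg hp0]
  rfl

theorem mixedLpNorm_const_mul_le {μ : Measure α} {p : ℝ≥0∞} (hp : 1 ≤ p) (c : ℝ≥0∞)
    {g : α → ℝ≥0∞} (hg : Measurable g) :
    mixedLpNorm μ p (fun a => c * g a) ≤ c * mixedLpNorm μ p g := by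
  unfold mixedLpNorm
  split_ifs with hpt
  · exact ENNReal.essSup_const_mul.le
  · have hq : 0 < p.toReal := ENNReal.toReal_pos (zero_lt_one.trans_le hp).ne' hpt
    simp_rw [ENNReal.mul_rpow_of_nonneg _ _ hq.le]
    rw [lintegral_const_mul _ (hg.pow_const _),
      ENNReal.mul_rpow_of_nonneg _ _ (by positivity : 0 ≤ 1 / p.toReal), ← ENNReal.rpow_mul,
      mul_one_div_cancel hq.ne', ENNReal.rpow_one]

/-- For `p = ∞` the sublevel set `{b | essSup F(·, b) ≤ c}` is `{b | μ {a | c < F (a, b)} = 0}`, which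
is measurable. -/
theorem measurable_mixedLpNorm {μ : Measure α} [SFinite μ] (p : ℝ≥0∞) {F : α × β → ℝ≥0∞}
    (hF : Measurable F) : Measurable (fun b => mixedLpNorm μ p (fun a => F (a, b))) := by
  unfold mixedLpNorm
  split_ifs with hp
  · refine measurable_of_Iic fun c => ?_
    have hset : (fun b => essSup (fun a => F (a, b)) μ) ⁻¹' Set.Iic c
        = (fun b => μ ((fun a => (a, b)) ⁻¹' {x | c < F x})) ⁻¹' {0} := by
      ext b
      simp only [Set.mem_preimage, Set.mem_Iic, Set.mem_singleton_iff, Set.preimage_ofPred_eq]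
      have h0 : μ {a | c < F (a, b)} = 0 ↔ ∀ᵐ a ∂μ, F (a, b) ≤ c := by
        simp [ae_iff]
      rw [h0]
      exact ⟨fun hc => (ENNReal.ae_le_essSup _).mono fun a ha => ha.trans hc,
        fun hc => essSup_le_of_ae_le c hc⟩
    rw [hset]
    exact measurable_measure_prodMk_right (measurableSet_lt measurable_const hF)
      (measurableSet_singleton 0)
  · exact ((hF.pow_const _).lintegral_prod_left').pow_const _

/-- Minkowski's integral inequality. For `1 < p < ∞`, put `φ b = ‖F(·, b)‖_{L^p}` and `C = ∫ φ`, which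
may be assumed finite. Hölder's inequality for `F = (F φ^{-1/p'}) φ^{1/p'}` gives
`(∫ F(a, b) db)^p ≤ C^{p-1} ∫ F(a, b)^p φ(b)^{1-p} db`; integrating in `a` bounds the left-hand side
by `C^p`. -/
theorem mixedLpNorm_lintegral_le {μ : Measure α} {ν : Measure β} [SFinite μ] [SFinite ν]
    {p : ℝ≥0∞} (hp : 1 ≤ p) {F : α × β → ℝ≥0∞} (hF : Measurable F) :
    mixedLpNorm μ p (fun a => ∫⁻ b, F (a, b) ∂ν)
      ≤ ∫⁻ b, mixedLpNorm μ p (fun a => F (a, b)) ∂ν := by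
  have hφm := measurable_mixedLpNorm (μ := μ) p hF
  rcases eq_or_ne p ∞ with rfl | hpt
  · have hle : ∀ᵐ a ∂μ, ∀ᵐ b ∂ν, F (a, b) ≤ mixedLpNorm μ ∞ (fun a => F (a, b)) := by
      have hms : MeasurableSet {x : α × β | F x ≤ mixedLpNorm μ ∞ (fun a => F (a, x.2))} :=
        measurableSet_le hF (hφm.comp measurable_snd)
      refine (Measure.ae_ae_comm hms).2 (.of_forall fun b => ?_)
      simpa [mixedLpNorm] using ENNReal.ae_le_essSup (fun a => F (a, b))
    conv_lhs => rw [mixedLpNorm, if_pos rfl]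
    exact essSup_le_of_ae_le _ (hle.mono fun a ha => lintegral_mono_ae ha)
  set φ : β → ℝ≥0∞ := fun b => mixedLpNorm μ p (fun a => F (a, b)) with hφ
  set q := p.toReal with hq
  have hq1 : 1 ≤ q := by
    simpa using ENNReal.toReal_mono hpt hp
  have hq0 : 0 < q := zero_lt_one.trans_le hq1
  have hφq : ∀ b, φ b ^ q = ∫⁻ a, F (a, b) ^ q ∂μ := by
    intro b
    simp only [hφ, mixedLpNorm, if_neg hpt, ← hq]
    rw [← ENNReal.rpow_mul, one_div_mul_cancel hq0.ne', ENNReal.rpow_one]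
  set C := ∫⁻ b, φ b ∂ν with hC
  conv_lhs => rw [mixedLpNorm, if_neg hpt]
  rw [← hq]
  rcases hq1.eq_or_lt with h1 | h1
  · rw [← h1]
    simp only [ENNReal.rpow_one, div_one]
    rw [lintegral_lintegral_swap (f := fun a b => F (a, b)) hF.aemeasurable]
    refine (lintegral_congr fun b => ?_).le
    simpa [← h1] using (hφq b).symm
  rcases eq_or_ne C ∞ with hCt | hCt
  · rw [hCt]; exact le_top
  have hconj : q.HolderConjugate q.conjExponent := Real.HolderConjugate.conjExponent h1
  set q' := q.conjExponent
  have hq'0 : 0 < q' := hconj.symm.pos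
  have hqq' : q / q' = q - 1 := hconj.div_conj_eq_sub_one
  -- Where `φ b = 0` the factorisation fails pointwise, but there `F (·, b)` vanishes almost everywhere.
  have key : ∀ᵐ a ∂μ, ∀ᵐ b ∂ν, F (a, b) ≤ (F (a, b) * φ b ^ (-(1 / q'))) * φ b ^ (1 / q') := by
    have hms : MeasurableSet {x : α × β |
        F x ≤ (F x * φ x.2 ^ (-(1 / q'))) * φ x.2 ^ (1 / q')} := by
      have : Measurable fun x : α × β => φ x.2 := hφm.comp measurable_snd
      exact measurableSet_le hF ((hF.mul (this.pow_const _)).mul (this.pow_const _))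
    refine (Measure.ae_ae_comm hms).2 ?_
    filter_upwards [ae_lt_top hφm hCt] with b hb
    rcases eq_or_ne (φ b) 0 with h0 | h0
    · have h2 := hφq b
      rw [h0, ENNReal.zero_rpow_of_pos hq0, eq_comm, lintegral_eq_zero_iff] at h2
      · filter_upwards [h2] with a ha
        have : F (a, b) = 0 := by simpa [hq0.not_gt, hq0] using ha
        simp [this]
      · exact (hF.comp measurable_prodMk_right).pow_const _
    · refine .of_forall fun a => ?_
      rw [mul_assoc, ← ENNReal.rpow_add _ _ h0 hb.ne]
      simp
  have hpt2 : ∀ᵐ a ∂μ, (∫⁻ b, F (a, b) ∂ν) ^ q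
      ≤ (∫⁻ b, F (a, b) ^ q * φ b ^ (-(q - 1)) ∂ν) * C ^ (q - 1) := by
    filter_upwards [key] with a ha
    have hFa : Measurable fun b => F (a, b) := hF.comp measurable_prodMk_left
    have hold := ENNReal.lintegral_mul_le_Lp_mul_Lq ν hconj
      (f := fun b => F (a, b) * φ b ^ (-(1 / q'))) (g := fun b => φ b ^ (1 / q'))
      (hFa.mul (hφm.pow_const _)).aemeasurable (hφm.pow_const _).aemeasurable
    have h3 := ENNReal.rpow_le_rpow ((lintegral_mono_ae ha).trans hold) hq0.le
    refine h3.trans (le_of_eq ?_)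
    rw [ENNReal.mul_rpow_of_nonneg _ _ hq0.le, ← ENNReal.rpow_mul, ← ENNReal.rpow_mul,
      one_div_mul_cancel hq0.ne', ENNReal.rpow_one, one_div_mul_eq_div, hqq']
    congr 1
    · refine lintegral_congr fun b => ?_
      rw [ENNReal.mul_rpow_of_nonneg _ _ hq0.le, ← ENNReal.rpow_mul, neg_mul,
        one_div_mul_eq_div, hqq']
    · simp_rw [← ENNReal.rpow_mul, one_div_mul_cancel hq'0.ne', ENNReal.rpow_one]
      rfl
  have hfin : ∫⁻ a, (∫⁻ b, F (a, b) ∂ν) ^ q ∂μ ≤ C ^ q := by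
    have hm2 : Measurable fun x : α × β => F x ^ q * φ x.2 ^ (-(q - 1)) :=
      (hF.pow_const _).mul ((hφm.comp measurable_snd).pow_const _)
    calc ∫⁻ a, (∫⁻ b, F (a, b) ∂ν) ^ q ∂μ
        ≤ ∫⁻ a, (∫⁻ b, F (a, b) ^ q * φ b ^ (-(q - 1)) ∂ν) * C ^ (q - 1) ∂μ :=
          lintegral_mono_ae hpt2
      _ = (∫⁻ b, φ b ^ q * φ b ^ (-(q - 1)) ∂ν) * C ^ (q - 1) := by
          rw [lintegral_mul_const _ hm2.lintegral_prod_right',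
            lintegral_lintegral_swap hm2.aemeasurable]
          congr 1
          refine lintegral_congr fun b => ?_
          have hFb : Measurable fun a => F (a, b) := hF.comp measurable_prodMk_right
          rw [hφq b]
          exact lintegral_mul_const (φ b ^ (-(q - 1))) (hFb.pow_const q)
      _ ≤ C * C ^ (q - 1) := by
          gcongr
          refine lintegral_mono_ae ?_
          filter_upwards [ae_lt_top hφm hCt] with b hb
          rcases eq_or_ne (φ b) 0 with h0 | h0
          · simp [h0, hq0]
          · rw [← ENNReal.rpow_add _ _ h0 hb.ne]
            simp
      _ = C ^ q := by
          conv_lhs => rw [← ENNReal.rpow_one C, ← ENNReal.rpow_mul, one_mul]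
          rw [← ENNReal.rpow_add_of_nonneg _ _ zero_le_one (by linarith)]
          simp
  calc (∫⁻ a, (∫⁻ b, F (a, b) ∂ν) ^ q ∂μ) ^ (1 / q) ≤ (C ^ q) ^ (1 / q) := by gcongr
    _ = C := by rw [← ENNReal.rpow_mul, mul_one_div_cancel hq0.ne', ENNReal.rpow_one]

end helpers

/-! ### Pointwise commutator bound and vertical derivatives -/

/-- Pointwise bound for the commutator. No integrability of `a * f * g` or `a * g` is assumed: when the
right-hand side is finite and `c ≠ 0`, either both are integrable, or neither is and both Bochner
integrals are zero by convention. -/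
theorem enorm_integral_commutator_le {a f g : ℝ → ℂ} (ha : Measurable a) (hf : Measurable f)
    (hg : Measurable g) (c : ℂ) :
    ‖(∫ t, a t * (f t * g t)) - c * ∫ t, a t * g t‖ₑ
      ≤ ∫⁻ t, ‖a t‖ₑ * (‖f t - c‖ₑ * ‖g t‖ₑ) := by
  have hI : ∫⁻ t, ‖a t‖ₑ * (‖f t - c‖ₑ * ‖g t‖ₑ) = ∫⁻ t, ‖a t * ((f t - c) * g t)‖ₑ := by
    simp only [enorm_mul]
  rw [hI]
  rcases eq_or_ne (∫⁻ t, ‖a t * ((f t - c) * g t)‖ₑ) ∞ with htop | hfin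
  · rw [htop]; exact le_top
  have hd : Integrable fun t => a t * ((f t - c) * g t) :=
    ⟨(ha.mul ((hf.sub_const c).mul hg)).aestronglyMeasurable, lt_top_iff_ne_top.2 hfin⟩
  suffices hsuff : ((∫ t, a t * (f t * g t)) - c * ∫ t, a t * g t)
      = ∫ t, a t * ((f t - c) * g t) ∨
      ((∫ t, a t * (f t * g t)) - c * ∫ t, a t * g t) = 0 by
    rcases hsuff with h | h
    · rw [h]; exact enorm_integral_le_lintegral_enorm _
    · rw [h]; simp
  rcases eq_or_ne c 0 with rfl | hc
  · left; simp
  by_cases h1 : Integrable fun t => a t * g t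
  · left
    have h2 : Integrable fun t => a t * (f t * g t) := by
      refine (hd.add (h1.const_mul c)).congr (.of_forall fun t => ?_)
      simp only [Pi.add_apply]; ring
    rw [← integral_const_mul, ← integral_sub h2 (h1.const_mul c)]
    refine integral_congr_ae (.of_forall fun t => ?_)
    simp only; ring
  · right
    have h2 : ¬ Integrable fun t => a t * (f t * g t) := by
      intro h2
      apply h1
      refine ((h2.sub hd).const_mul c⁻¹).congr (.of_forall fun t => ?_)
      simp only [Pi.sub_apply]; field_simp; ring
    rw [integral_undef h1, integral_undef h2]; simp

/-- The fundamental theorem of calculus as an inequality in `ℝ≥0∞`; it is trivial when `f'` is not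
integrable between `a` and `b`. -/
theorem enorm_sub_le_lintegral_deriv {f f' : ℝ → ℂ} (hf : ∀ t, HasDerivAt f (f' t) t)
    (hf' : Measurable f') (a b : ℝ) :
    ‖f b - f a‖ₑ ≤ ∫⁻ t in Set.uIoc a b, ‖f' t‖ₑ := by
  rcases eq_or_ne (∫⁻ t in Set.uIoc a b, ‖f' t‖ₑ) ∞ with htop | hfin
  · rw [htop]; exact le_top
  have hi : IntervalIntegrable f' volume a b :=
    intervalIntegrable_iff.2 ⟨hf'.aestronglyMeasurable, lt_top_iff_ne_top.2 hfin⟩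
  rw [← intervalIntegral.integral_eq_sub_of_hasDerivAt (fun t _ => hf t) hi]
  calc ‖∫ t in a..b, f' t‖ₑ = ‖∫ t in Set.uIoc a b, f' t‖ₑ := by
        rw [← ofReal_norm, ← ofReal_norm, intervalIntegral.norm_intervalIntegral_eq]
    _ ≤ _ := enorm_integral_le_lintegral_enorm _

/-- The derivative in the last variable is a pointwise limit of the jointly measurable difference
quotients with step `1 / (n + 1)`. -/
theorem measurable_param_deriv {α : Type*} [MeasurableSpace α] {v d : α × ℝ → ℂ}
    (hv : Measurable v)
    (hd : ∀ x t, HasDerivAt (fun t => v (x, t)) (d (x, t)) t) : Measurable d := by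
  have hlim : Filter.Tendsto
      (fun (n : ℕ) (x : α × ℝ) => ((n : ℝ) + 1) • (v (x.1, x.2 + ((n : ℝ) + 1)⁻¹) - v x))
      Filter.atTop (nhds d) := by
    refine tendsto_pi_nhds.2 fun x => ?_
    have h1 := (hd x.1 x.2).tendsto_slope_zero_right
    have h2 : Filter.Tendsto (fun n : ℕ => ((n : ℝ) + 1)⁻¹) Filter.atTop
        (nhdsWithin 0 (Set.Ioi 0)) := by
      refine tendsto_nhdsWithin_iff.2 ⟨?_, .of_forall fun n => ?_⟩
      · simpa [one_div] using tendsto_one_div_add_atTop_nhds_zero_nat (𝕜 := ℝ)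
      · exact Set.mem_Ioi.2 (by positivity)
    simpa [Function.comp_def] using h1.comp h2
  refine measurable_of_tendsto_metrizable (fun n => ?_) hlim
  have : Measurable fun x : α × ℝ => v (x.1, x.2 + ((n : ℝ) + 1)⁻¹) :=
    hv.comp (by fun_prop)
  exact (this.sub hv).const_smul ((n : ℝ) + 1)

/-! ### Norm estimates for products, increments and convolutions -/

/-- Hölder's inequality. -/
theorem mixedLpNorm_mul_le {α : Type*} [MeasurableSpace α] {μ : Measure α} {p r s : ℝ≥0∞}
    (hp : 1 ≤ p) (hr : 1 ≤ r) (hs : 1 ≤ s) (hprs : 1 / p = 1 / r + 1 / s)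
    {f g : α → ℂ} (hf : Measurable f) (hg : Measurable g) :
    mixedLpNorm μ p (fun a => ‖f a‖ₑ * ‖g a‖ₑ)
      ≤ mixedLpNorm μ r (fun a => ‖f a‖ₑ) * mixedLpNorm μ s (fun a => ‖g a‖ₑ) := by
  have : ENNReal.HolderTriple r s p := ⟨by simpa [one_div] using hprs.symm⟩
  have h := eLpNorm_smul_le_mul_eLpNorm (p := r) (q := s) (r := p) (μ := μ)
    hg.aestronglyMeasurable hf.aestronglyMeasurable
  rw [mixedLpNorm_eq_eLpNorm hr, mixedLpNorm_eq_eLpNorm hs]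
  refine le_of_eq_of_le ?_ h
  rw [← mixedLpNorm_eq_eLpNorm hp]
  simp [enorm_mul]

theorem mixedLpNorm_sub_le {v d : (ℝ × ℝ) × ℝ → ℂ} (hv : Measurable v)
    (hd : ∀ x t, HasDerivAt (fun t => v (x, t)) (d (x, t)) t) {r : ℝ≥0∞} (hr : 1 ≤ r) (a b : ℝ) :
    mixedLpNorm volume r (fun x => ‖v (x, b) - v (x, a)‖ₑ)
      ≤ ‖a - b‖ₑ * mixedLpNorm (volume : Measure ℝ) ∞
          (fun z => mixedLpNorm volume r (fun x => ‖d (x, z)‖ₑ)) := by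
  have hdm := measurable_param_deriv hv hd
  calc mixedLpNorm volume r (fun x => ‖v (x, b) - v (x, a)‖ₑ)
      ≤ mixedLpNorm volume r (fun x => ∫⁻ t in Set.uIoc a b, ‖d (x, t)‖ₑ) :=
        mixedLpNorm_mono_ae (.of_forall fun x =>
          enorm_sub_le_lintegral_deriv (hd x) (hdm.comp measurable_prodMk_left) a b)
    _ ≤ ∫⁻ t in Set.uIoc a b, mixedLpNorm volume r (fun x => ‖d (x, t)‖ₑ) :=
        mixedLpNorm_lintegral_le (F := fun y => ‖d y‖ₑ) hr hdm.enorm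
    _ ≤ ∫⁻ t in Set.uIoc a b, mixedLpNorm (volume : Measure ℝ) ∞
          (fun z => mixedLpNorm volume r (fun x => ‖d (x, z)‖ₑ)) := by
        refine lintegral_mono_ae (ae_restrict_of_ae ?_)
        conv => enter [1, x, 2]; rw [mixedLpNorm, if_pos rfl]
        exact ENNReal.ae_le_essSup _
    _ = _ := by
        rw [setLIntegral_const, mul_comm, Set.uIoc, Real.volume_Ioc, max_sub_min_eq_abs,
          abs_sub_comm, ← Real.norm_eq_abs, ofReal_norm]

/-- The `L¹` norm of `y ↦ |y| |h_λ(y)|`, by the change of variables `z = λ y`. -/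
theorem lintegral_kernel {h : ℝ → ℂ}
    (hint : Integrable (fun z : ℝ => |z| * ‖h z‖)) {lam : ℝ} (hlam : 0 < lam) :
    ∫⁻ y : ℝ, ‖(lam : ℂ) * h (lam * y)‖ₑ * ‖y‖ₑ
      = ENNReal.ofReal (lam⁻¹ * ∫ z : ℝ, |z| * ‖h z‖) := by
  have h1 := Measure.integral_comp_mul_left (fun z : ℝ => |z| * ‖h z‖) lam
  rw [abs_of_pos (inv_pos.2 hlam), smul_eq_mul] at h1
  rw [← h1, ofReal_integral_eq_lintegral_ofReal (hint.comp_mul_left' hlam.ne')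
    (.of_forall fun z => by positivity)]
  refine lintegral_congr fun y => ?_
  rw [← ofReal_norm, ← ofReal_norm, ← ENNReal.ofReal_mul (norm_nonneg _)]
  congr 1
  simp [abs_mul, abs_of_pos hlam]
  ring

/-- Young's inequality `L¹ * L² ⊆ L²`, from Minkowski's inequality and translation invariance. -/
theorem mixedLpNorm_two_conv_le {k W : ℝ → ℝ≥0∞} (hk : Measurable k) (hW : Measurable W) :
    mixedLpNorm volume 2 (fun z : ℝ => ∫⁻ t, k (z - t) * W t)
      ≤ (∫⁻ y, k y) * mixedLpNorm volume 2 W := by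
  have hswap : ∀ z, ∫⁻ t, k (z - t) * W t = ∫⁻ y, k y * W (z - y) := by
    intro z
    rw [← lintegral_sub_left_eq_self _ z]
    simp
  simp_rw [hswap]
  calc mixedLpNorm volume 2 (fun z : ℝ => ∫⁻ y, k y * W (z - y))
      ≤ ∫⁻ y, mixedLpNorm volume 2 (fun z : ℝ => k y * W (z - y)) :=
        mixedLpNorm_lintegral_le (F := fun x : ℝ × ℝ => k x.2 * W (x.1 - x.2)) one_le_two
          (by fun_prop)
    _ ≤ ∫⁻ y, k y * mixedLpNorm volume 2 W := by
        refine lintegral_mono fun y => ?_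
        refine (mixedLpNorm_const_mul_le one_le_two _ (by fun_prop)).trans (le_of_eq ?_)
        congr 1
        simp only [mixedLpNorm, if_neg ENNReal.ofNat_ne_top]
        rw [lintegral_sub_right_eq_self (fun z => W z ^ (2 : ℝ≥0∞).toReal) y]
    _ = _ := lintegral_mul_const _ hk

/-! ### The commutator estimate -/

/-- The commutator estimate for the pointwise majorant of the commutator, with a general kernel `K` and
a function `v` that is differentiable in `z` for every `x_h`. -/
theorem mixedLpNorm_commutator_majorant_le {K : ℝ → ℂ} (hK : Measurable K)
    {p r s : ℝ≥0∞} (hp : 1 ≤ p) (hr : 1 ≤ r) (hs : 1 ≤ s) (hprs : 1 / p = 1 / r + 1 / s)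
    {v d w : (ℝ × ℝ) × ℝ → ℂ} (hv : Measurable v) (hw : Measurable w)
    (hd : ∀ x t, HasDerivAt (fun t => v (x, t)) (d (x, t)) t) :
    mixedLpNorm (volume : Measure ℝ) 2
      (fun z => mixedLpNorm (volume : Measure (ℝ × ℝ)) p
        (fun x => ∫⁻ t, ‖K (z - t)‖ₑ * (‖v (x, t) - v (x, z)‖ₑ * ‖w (x, t)‖ₑ)))
      ≤ (∫⁻ y, ‖K y‖ₑ * ‖y‖ₑ)
        * mixedLpNorm (volume : Measure ℝ) ∞
            (fun z => mixedLpNorm (volume : Measure (ℝ × ℝ)) r (fun x => ‖d (x, z)‖ₑ))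
        * mixedLpNorm (volume : Measure ℝ) 2
            (fun z => mixedLpNorm (volume : Measure (ℝ × ℝ)) s (fun x => ‖w (x, z)‖ₑ)) := by
  have hsub := mixedLpNorm_sub_le hv hd hr
  generalize mixedLpNorm (volume : Measure ℝ) ∞
    (fun z => mixedLpNorm (volume : Measure (ℝ × ℝ)) r (fun x => ‖d (x, z)‖ₑ)) = M at hsub ⊢
  have hWm : Measurable fun z => mixedLpNorm (volume : Measure (ℝ × ℝ)) s
    (fun x => ‖w (x, z)‖ₑ) := measurable_mixedLpNorm (F := fun y => ‖w y‖ₑ) s hw.enorm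
  have hkm : Measurable fun y => ‖K y‖ₑ * ‖y‖ₑ := hK.enorm.mul measurable_enorm
  have hconv := mixedLpNorm_two_conv_le (hkm.const_mul M) hWm
  rw [lintegral_const_mul M hkm, mul_comm M] at hconv
  refine le_trans (mixedLpNorm_mono_ae (.of_forall fun z => ?_)) hconv
  have hvz : ∀ t, Measurable fun x => v (x, t) - v (x, z) := fun t => by fun_prop
  have hFm : Measurable fun y : (ℝ × ℝ) × ℝ =>
      ‖K (z - y.2)‖ₑ * (‖v y - v (y.1, z)‖ₑ * ‖w y‖ₑ) := by
    have h1 : Measurable fun y : (ℝ × ℝ) × ℝ => K (z - y.2) := by fun_prop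
    have h2 : Measurable fun y : (ℝ × ℝ) × ℝ => v y - v (y.1, z) := by fun_prop
    exact h1.enorm.mul (h2.enorm.mul hw.enorm)
  refine (mixedLpNorm_lintegral_le (F := fun y : (ℝ × ℝ) × ℝ =>
    ‖K (z - y.2)‖ₑ * (‖v y - v (y.1, z)‖ₑ * ‖w y‖ₑ)) hp hFm).trans ?_
  refine lintegral_mono fun t => ?_
  have hwt : Measurable fun x => w (x, t) := by fun_prop
  have h1 := mixedLpNorm_const_mul_le (μ := volume) hp ‖K (z - t)‖ₑ
    (g := fun x => ‖v (x, t) - v (x, z)‖ₑ * ‖w (x, t)‖ₑ) ((hvz t).enorm.mul hwt.enorm)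
  have h2 := mixedLpNorm_mul_le (μ := volume) hp hr hs hprs (hvz t) hwt
  refine h1.trans ((mul_le_mul_right (h2.trans (mul_le_mul_left (hsub z t) _)) _).trans
    (le_of_eq ?_))
  ring

/-- **Commutator estimate for vertical convolution operators**:
`‖T_λ(uw) − u T_λ w‖_{L²_z(L^p_{x_h})} ≤ λ⁻¹ (∫ |z||h(z)| dz) ‖∂_z u‖_{L^∞_z(L^r_{x_h})}
‖w‖_{L²_z(L^s_{x_h})}` whenever `1/p = 1/r + 1/s`. -/
theorem commutator_vertical_convolution (h : ℝ → ℂ) (hmeas : Measurable h)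
    (hint : Integrable (fun z : ℝ => |z| * ‖h z‖))
    (lam : ℝ) (hlam : 0 < lam)
    (p r s : ℝ≥0∞) (hp : 1 ≤ p) (hr : 1 ≤ r) (hs : 1 ≤ s)
    (hprs : 1 / p = 1 / r + 1 / s)
    (u w : (ℝ × ℝ) × ℝ → ℂ) (hu : Measurable u) (hw : Measurable w)
    (hudiff : ∀ᵐ xh : ℝ × ℝ, ∀ z : ℝ, DifferentiableAt ℝ (fun t => u (xh, t)) z)
    (hdzu_fin : mixedLpNorm (volume : Measure ℝ) ∞
      (fun z => mixedLpNorm (volume : Measure (ℝ × ℝ)) r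
        (fun xh => (‖deriv (fun t => u (xh, t)) z‖₊ : ℝ≥0∞))) < ∞)
    (hw_fin : mixedLpNorm (volume : Measure ℝ) 2
      (fun z => mixedLpNorm (volume : Measure (ℝ × ℝ)) s
        (fun xh => (‖w (xh, z)‖₊ : ℝ≥0∞))) < ∞) :
    mixedLpNorm (volume : Measure ℝ) 2
      (fun z => mixedLpNorm (volume : Measure (ℝ × ℝ)) p
        (fun xh => (‖vertConv h lam (fun v => u v * w v) xh z
            - u (xh, z) * vertConv h lam w xh z‖₊ : ℝ≥0∞)))
      ≤ ENNReal.ofReal (lam⁻¹ * ∫ z : ℝ, |z| * ‖h z‖)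
        * mixedLpNorm (volume : Measure ℝ) ∞
            (fun z => mixedLpNorm (volume : Measure (ℝ × ℝ)) r
              (fun xh => (‖deriv (fun t => u (xh, t)) z‖₊ : ℝ≥0∞)))
        * mixedLpNorm (volume : Measure ℝ) 2
            (fun z => mixedLpNorm (volume : Measure (ℝ × ℝ)) s
              (fun xh => (‖w (xh, z)‖₊ : ℝ≥0∞))) := by
  obtain ⟨S, hS, hSm, hSdiff⟩ := Filter.Eventually.exists_measurable_mem hudiff
  classical
  -- Setting `u` to zero off `S` makes it differentiable in `z` for every `x_h`.
  set v : (ℝ × ℝ) × ℝ → ℂ := fun y => if y.1 ∈ S then u y else 0 with hvdef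
  set d : (ℝ × ℝ) × ℝ → ℂ := fun y => deriv (fun t => v (y.1, t)) y.2 with hddef
  have hv : Measurable v := Measurable.ite (measurable_fst hSm) hu measurable_const
  have hvS : ∀ x ∈ S, (fun t => v (x, t)) = fun t => u (x, t) := by
    intro x hx
    funext t
    simp [hvdef, hx]
  have hd : ∀ x t, HasDerivAt (fun t => v (x, t)) (d (x, t)) t := by
    intro x t
    apply DifferentiableAt.hasDerivAt
    by_cases hx : x ∈ S
    · rw [hvS x hx]; exact hSdiff x hx t
    · simp [hvdef, hx]
  have hMeq : mixedLpNorm (volume : Measure ℝ) ∞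
      (fun z => mixedLpNorm (volume : Measure (ℝ × ℝ)) r
        (fun xh => (‖deriv (fun t => u (xh, t)) z‖₊ : ℝ≥0∞)))
      = mixedLpNorm (volume : Measure ℝ) ∞
        (fun z => mixedLpNorm (volume : Measure (ℝ × ℝ)) r (fun x => ‖d (x, z)‖ₑ)) := by
    congr 1
    funext z
    refine le_antisymm (mixedLpNorm_mono_ae ?_) (mixedLpNorm_mono_ae ?_) <;>
    · filter_upwards [hS] with x hx
      simp only [hddef, hvS x hx]
      exact le_rfl
  have hK : Measurable fun y : ℝ => (lam : ℂ) * h (lam * y) := by fun_prop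
  rw [hMeq, ← lintegral_kernel hint hlam]
  refine le_trans (mixedLpNorm_mono_ae (.of_forall fun z => mixedLpNorm_mono_ae ?_))
    (mixedLpNorm_commutator_majorant_le hK hp hr hs hprs hv hw hd)
  filter_upwards [hS] with x hx
  have hux : ∀ t, v (x, t) = u (x, t) := fun t => congrFun (hvS x hx) t
  simp only [hux]
  exact enorm_integral_commutator_le (a := fun t => (lam : ℂ) * h (lam * (z - t)))
    (f := fun t => u (x, t)) (g := fun t => w (x, t))
    (by fun_prop) (by fun_prop) (by fun_prop) (u (x, z))
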